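/- Let (x̄, ȳ) ∈ X × Y(x̄) with X ⊆ ℝⁿ closed and Y : ℝⁿ ⇉ ℝᵐ closed-valued. Suppose f is twice semidifferentiable at (x̄, ȳ), and Y is semidifferentiable at x̄ for ȳ and calm around (x̄, ȳ). Assume: (1) sup_{h ∈ DY(x̄,ȳ)(u)} df(x̄,ȳ)(u,h) ≥ 0 for all u ∈ T_X(x̄) and d_y f(x̄,ȳ)(h) ≤ 0 for all h ∈ T_{Y(x̄)}(ȳ); (2) d²_{yy} f(x̄,ȳ)(h) − d²δ_{Y(x̄)}(ȳ; d_y f(x̄,ȳ))(h) < 0 for all h ∈ T_{Y(x̄)}(ȳ) ∩ {h' : d_y f(x̄,ȳ)(h') = 0} \ {0}; (3) for every u ∈ T_X(x̄) ∩ {u : max_{h' ∈ DY(x̄,ȳ)(u)} df(x̄,ȳ)(u,h') = 0}, there exist −vᵘ ∈ N_X(x̄) ∩ {u}^⊥ and (ξ₁ᵘ, ξ₂ᵘ) ∈ N_{gph Y}(x̄,ȳ) with ⟨(vᵘ,0)+(ξ₁ᵘ,ξ₂ᵘ),(u',h')⟩ = df(x̄,ȳ)(u',h') for all (u',h'), d²δ_X(x̄;−vᵘ)(u)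 is finite, d²δ_{gph Y}((x̄,ȳ); df(x̄,ȳ))(u,h) is finite for every h ∈ C(x̄,ȳ;u), and δ_{gph Y} is strongly twice epi-differentiable at (x̄,ȳ) for (ξ₁ᵘ,ξ₂ᵘ); (4) for every u ∈ T_X(x̄) ∩ {u : max_{h' ∈ DY(x̄,ȳ)(u)} df(x̄,ȳ)(u,h') = 0} \ {0}: sup_{h ∈ C(x̄,ȳ;u)} { d²f(x̄,ȳ)(u,h) + d²δ_X(x̄;−vᵘ)(u) − d²δ_{gph Y}((x̄,ȳ); df(x̄,ȳ))(u,h) } > 0. Then (x̄, ȳ) is a calm local minimax point of min_{x∈X} max_{y∈Y(x)} f(x,y) and the second-order growth condition holds: there exist δ₀ > 0, ε > 0, μ > 0, κ > 0 such that for all x ∈ X ∩ 𝔹_{δ₀}(x̄) and y ∈ Y(x̄) ∩ 𝔹_{δ₀}(ȳ): f(x̄, y) + ε‖y − ȳ‖² ≤ f(x̄, ȳ) ≤ max_{y' ∈ Y(x) ∩ 𝔹_{κ‖x−x̄‖}(ȳ)} f(x, y') − μ‖x − x̄‖². -/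

import Mathlib

open Filter Topology Set Metric Classical
open scoped RealInnerProductSpace

noncomputable section

/-- Euclidean space ℝ^n. -/
abbrev Eu (n : ℕ) := EuclideanSpace ℝ (Fin n)

/-- The filter describing `t ↓ 0, w' → w`. -/
def quotFilter {E : Type*} [TopologicalSpace E] (w : E) : Filter (ℝ × E) :=
  (𝓝[>] (0 : ℝ)) ×ˢ 𝓝 w

section Normed

variable {E F : Type*} [NormedAddCommGroup E] [NormedSpace ℝ E]
  [NormedAddCommGroup F] [NormedSpace ℝ F]

/-- Subderivative `dψ(z)(w) = liminf_{t↓0, w'→w} (ψ(z+tw')-ψ(z))/t`, in `EReal`. -/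
def dsub (ψ : E → ℝ) (z w : E) : EReal :=
  liminf (fun p : ℝ × E => (((ψ (z + p.1 • p.2) - ψ z) / p.1 : ℝ) : EReal)) (quotFilter w)

/-- Superderivative `d⁺ψ(z)(w) = limsup_{t↓0, w'→w} (ψ(z+tw')-ψ(z))/t`, in `EReal`. -/
def dsup (ψ : E → ℝ) (z w : E) : EReal :=
  limsup (fun p : ℝ × E => (((ψ (z + p.1 • p.2) - ψ z) / p.1 : ℝ) : EReal)) (quotFilter w)

/-- `ψ` is semidifferentiable at `z`: for every `w` the limit of the difference
quotients exists (as a real number). -/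
def SemidiffAt (ψ : E → ℝ) (z : E) : Prop :=
  ∀ w, ∃ L : ℝ,
    Tendsto (fun p : ℝ × E => (ψ (z + p.1 • p.2) - ψ z) / p.1) (quotFilter w) (𝓝 L)

/-- Second subderivative `d²ψ(z)(w)` (without mention of a vector), in `EReal`. -/
def d2sub (ψ : E → ℝ) (z w : E) : EReal :=
  liminf (fun p : ℝ × E =>
      (((ψ (z + p.1 • p.2) - ψ z - p.1 * (dsub ψ z p.2).toReal) / (p.1 ^ 2 / 2) : ℝ) : EReal))
    (quotFilter w)

/-- `ψ` is twice semidifferentiable at `z`. -/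
def TwiceSemidiffAt (ψ : E → ℝ) (z : E) : Prop :=
  SemidiffAt ψ z ∧ ∀ w, ∃ Q : ℝ,
    Tendsto (fun p : ℝ × E =>
        (ψ (z + p.1 • p.2) - ψ z - p.1 * (dsub ψ z p.2).toReal) / (p.1 ^ 2 / 2))
      (quotFilter w) (𝓝 Q)

/-- Second subderivative of the indicator function `δ_S` at `z` for the
(pre-)derivative function `d` and direction `w`:
`liminf_{t↓0, w'→w} (δ_S(z+tw') - t d(w'))/(t²/2)`. -/
def d2IndSub (S : Set E) (d : E → ℝ) (z w : E) : EReal :=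
  liminf (fun p : ℝ × E =>
      if z + p.1 • p.2 ∈ S then (((-(p.1 * d p.2)) / (p.1 ^ 2 / 2) : ℝ) : EReal)
      else (⊤ : EReal))
    (quotFilter w)

/-- Tangent (contingent) cone via sequences. -/
def tCone (S : Set E) (z : E) : Set E :=
  {w | ∃ (t : ℕ → ℝ) (w' : ℕ → E), (∀ k, 0 < t k) ∧ Tendsto t atTop (𝓝 0) ∧
    Tendsto w' atTop (𝓝 w) ∧ ∀ k, z + t k • w' k ∈ S}

/-- Inner tangent cone via sequences. -/
def innerTCone (S : Set E) (z : E) : Set E :=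
  {w | ∀ t : ℕ → ℝ, (∀ k, 0 < t k) → Tendsto t atTop (𝓝 0) →
    ∃ w' : ℕ → E, Tendsto w' atTop (𝓝 w) ∧ ∀ k, z + t k • w' k ∈ S}

/-- A set is geometrically derivable if tangent and inner tangent cones coincide
at every point of the set. -/
def GeomDerivable (S : Set E) : Prop := ∀ z ∈ S, tCone S z = innerTCone S z

/-- Graphical derivative (Painlevé–Kuratowski outer limit of difference quotients). -/
def graphDeriv (Y : E → Set F) (xb : E) (yb : F) (u : E) : Set F :=
  {h | ∃ (t : ℕ → ℝ) (u' : ℕ → E) (h' : ℕ → F),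
    (∀ k, 0 < t k) ∧ Tendsto t atTop (𝓝 0) ∧ Tendsto u' atTop (𝓝 u) ∧
    Tendsto h' atTop (𝓝 h) ∧ ∀ k, yb + t k • h' k ∈ Y (xb + t k • u' k)}

/-- Painlevé–Kuratowski inner limit of the difference quotients of a set-valued map. -/
def innerDeriv (Y : E → Set F) (xb : E) (yb : F) (u : E) : Set F :=
  {h | ∀ (t : ℕ → ℝ) (u' : ℕ → E), (∀ k, 0 < t k) → Tendsto t atTop (𝓝 0) →
    Tendsto u' atTop (𝓝 u) →
    ∃ h' : ℕ → F, Tendsto h' atTop (𝓝 h) ∧ ∀ k, yb + t k • h' k ∈ Y (xb + t k • u' k)}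

/-- `Y` is semidifferentiable at `xb` for `yb`: for every `u` the limit of the
difference quotient sets exists, i.e. outer and inner limits coincide. -/
def SetSemidiffAt (Y : E → Set F) (xb : E) (yb : F) : Prop :=
  ∀ u, graphDeriv Y xb yb u = innerDeriv Y xb yb u

/-- `Y` is calm around `(xb, yb)`. -/
def SetCalmAround (Y : E → Set F) (xb : E) (yb : F) : Prop :=
  ∃ l > (0 : ℝ), ∃ U ∈ 𝓝 xb, ∃ V ∈ 𝓝 yb, ∀ x ∈ U, ∀ y ∈ Y x ∩ V, ‖y - yb‖ ≤ l * ‖x - xb‖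

/-- `Y` is Lipschitz-like (Aubin property) around `(xb, yb)`. -/
def SetLipschitzLikeAround (Y : E → Set F) (xb : E) (yb : F) : Prop :=
  ∃ l > (0 : ℝ), ∃ U ∈ 𝓝 xb, ∃ V ∈ 𝓝 yb, ∀ x ∈ U, ∀ x' ∈ U, ∀ y ∈ Y x ∩ V,
    ∃ y' ∈ Y x', ‖y - y'‖ ≤ l * ‖x - x'‖

/-- Inner calmness of a set-valued map at `(xb, yb)` with respect to `X`. -/
def InnerCalmOn (Γ : E → Set F) (X : Set E) (xb : E) (yb : F) : Prop :=
  ∃ κ > (0 : ℝ), ∃ δ₀ > (0 : ℝ), ∀ x ∈ X ∩ closedBall xb δ₀,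
    ∃ y ∈ Γ x, ‖y - yb‖ ≤ κ * ‖x - xb‖

/-- Value of the (localized) maximization `max_{y ∈ A} f(x, y)`. -/
def maxVal (f : E × F → ℝ) (x : E) (A : Set F) : ℝ := sSup ((fun y => f (x, y)) '' A)

/-- Solution set of the maximization `max_{y ∈ A} f(x, y)`. -/
def argmaxSet (f : E × F → ℝ) (x : E) (A : Set F) : Set F :=
  {y ∈ A | ∀ y' ∈ A, f (x, y') ≤ f (x, y)}

/-- The defining inequalities of a local minimax point, for radius `δ₀` and radius
function `τ`. -/
def MinimaxIneq (f : E × F → ℝ) (X : Set E) (Y : E → Set F) (xb : E) (yb : F)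
    (δ₀ : ℝ) (τ : ℝ → ℝ) : Prop :=
  ∀ δ ∈ Ioc (0 : ℝ) δ₀, ∀ x ∈ X ∩ closedBall xb δ, ∀ y ∈ Y xb ∩ closedBall yb δ,
    f (xb, y) ≤ f (xb, yb) ∧ f (xb, yb) ≤ maxVal f x (Y x ∩ closedBall yb (τ δ))

/-- Local minimax point. -/
def IsLocalMinimaxPt (f : E × F → ℝ) (X : Set E) (Y : E → Set F) (xb : E) (yb : F) : Prop :=
  xb ∈ X ∧ yb ∈ Y xb ∧ ∃ δ₀ > (0 : ℝ), ∃ τ : ℝ → ℝ, (∀ δ, 0 ≤ τ δ) ∧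
    Tendsto τ (𝓝[>] (0 : ℝ)) (𝓝 0) ∧ MinimaxIneq f X Y xb yb δ₀ τ

/-- Calm local minimax point: a local minimax point whose radius function is calm at 0. -/
def IsCalmLocalMinimaxPt (f : E × F → ℝ) (X : Set E) (Y : E → Set F) (xb : E) (yb : F) : Prop :=
  xb ∈ X ∧ yb ∈ Y xb ∧ ∃ δ₀ > (0 : ℝ), ∃ τ : ℝ → ℝ, (∀ δ, 0 ≤ τ δ) ∧
    Tendsto τ (𝓝[>] (0 : ℝ)) (𝓝 0) ∧ (∃ κ > (0 : ℝ), ∀ δ ≥ (0 : ℝ), τ δ ≤ κ * δ) ∧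
    MinimaxIneq f X Y xb yb δ₀ τ

/-- Second-order growth condition at a (calm local) minimax point. -/
def SecondOrderGrowth (f : E × F → ℝ) (X : Set E) (Y : E → Set F) (xb : E) (yb : F) : Prop :=
  ∃ δ₀ > (0 : ℝ), ∃ ε > (0 : ℝ), ∃ μ > (0 : ℝ), ∃ κ > (0 : ℝ),
    ∀ x ∈ X ∩ closedBall xb δ₀, ∀ y ∈ Y xb ∩ closedBall yb δ₀,
      f (xb, y) + ε * ‖y - yb‖ ^ 2 ≤ f (xb, yb) ∧
      f (xb, yb) ≤ maxVal f x (Y x ∩ closedBall yb (κ * ‖x - xb‖)) - μ * ‖x - xb‖ ^ 2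

end Normed

section InnerP

variable {E F : Type*} [NormedAddCommGroup E] [InnerProductSpace ℝ E]
  [NormedAddCommGroup F] [InnerProductSpace ℝ F]

/-- Second subderivative of the indicator `δ_S` at `z` for a vector `v` and direction `w`. -/
def d2IndVec (S : Set E) (z v w : E) : EReal :=
  d2IndSub S (fun w' => ⟪v, w'⟫) z w

/-- Regular (Fréchet) normal cone, via polarity with the tangent cone. -/
def regNCone (S : Set E) (z : E) : Set E :=
  {v | ∀ w ∈ tCone S z, ⟪v, w⟫ ≤ 0}

/-- Limiting (Mordukhovich) normal cone. -/
def limNCone (S : Set E) (z : E) : Set E :=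
  {v | ∃ (zk : ℕ → E) (vk : ℕ → E), (∀ k, zk k ∈ S) ∧ Tendsto zk atTop (𝓝 z) ∧
    Tendsto vk atTop (𝓝 v) ∧ ∀ k, vk k ∈ regNCone S (zk k)}

/-- Normal cone of convex analysis. -/
def convNCone (D : Set E) (d : E) : Set E :=
  {v | ∀ z ∈ D, ⟪v, z - d⟫ ≤ 0}

/-- The inner product on a product of inner product spaces (ℓ²-pairing). -/
def pairInner (a b : E × F) : ℝ := ⟪a.1, b.1⟫ + ⟪a.2, b.2⟫

/-- Regular (Fréchet) normal cone for subsets of a product space. -/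
def regNConeP (S : Set (E × F)) (z : E × F) : Set (E × F) :=
  {v | ∀ w ∈ tCone S z, pairInner v w ≤ 0}

/-- Limiting normal cone for subsets of a product space. -/
def limNConeP (S : Set (E × F)) (z : E × F) : Set (E × F) :=
  {v | ∃ (zk : ℕ → E × F) (vk : ℕ → E × F), (∀ k, zk k ∈ S) ∧ Tendsto zk atTop (𝓝 z) ∧
    Tendsto vk atTop (𝓝 v) ∧ ∀ k, vk k ∈ regNConeP S (zk k)}

end InnerP

/-- Graph of a set-valued map. -/
def gphSet {E F : Type*} (Y : E → Set F) : Set (E × F) := {p : E × F | p.2 ∈ Y p.1}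

/-- `δ_S` (indicator of `S ⊆ E × F`) is strongly twice epi-differentiable at `z` for the
linear functional represented by `d` (namely `w ↦ ⟨ξ, w⟩`). -/
def StrongTwiceEpiDiffInd {E F : Type*} [NormedAddCommGroup E] [NormedSpace ℝ E]
    [NormedAddCommGroup F] [NormedSpace ℝ F]
    (S : Set (E × F)) (z : E × F) (d : E × F → ℝ) : Prop :=
  ∀ (u : E) (h : F) (t : ℕ → ℝ) (uk : ℕ → E),
    (∀ k, 0 < t k) → Filter.Tendsto t atTop (𝓝 0) → Filter.Tendsto uk atTop (𝓝 u) →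
    ∃ hk : ℕ → F, Filter.Tendsto hk atTop (𝓝 h) ∧
      Filter.Tendsto (fun k =>
          if z + t k • (uk k, hk k) ∈ S then
            (((-(t k * d (uk k, hk k))) / (t k ^ 2 / 2) : ℝ) : EReal)
          else (⊤ : EReal))
        atTop (𝓝 (d2IndSub S d z (u, h)))

section Sequential

theorem quotFilter_neBot {E : Type*} [TopologicalSpace E] (w : E) : (quotFilter w).NeBot := by
  unfold quotFilter; infer_instance

theorem tendsto_quotFilter {E : Type*} [TopologicalSpace E] {t : ℕ → ℝ} {w' : ℕ → E}
    {w : E} (ht : ∀ k, 0 < t k) (ht0 : Tendsto t atTop (𝓝 0)) (hw : Tendsto w' atTop (𝓝 w)) :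
    Tendsto (fun k => (t k, w' k)) atTop (quotFilter w) :=
  (tendsto_nhdsWithin_iff.2 ⟨ht0, Eventually.of_forall ht⟩).prodMk hw

variable {E F : Type*} [NormedAddCommGroup E] [NormedSpace ℝ E]
  [NormedAddCommGroup F] [NormedSpace ℝ F]

theorem liminf_le_of_tendsto_comp {α : Type*} {l : Filter α} {g : α → EReal} {s : ℕ → α}
    {a : EReal} (hs : Tendsto s atTop l) (hg : Tendsto (fun k => g (s k)) atTop (𝓝 a)) :
    liminf g l ≤ a := by
  rw [← hg.liminf_eq]
  exact liminf_le_liminf_of_le hs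

theorem dsub_eq_of_tendsto {ψ : E → ℝ} {z w : E} {L : ℝ}
    (h : Tendsto (fun p : ℝ × E => (ψ (z + p.1 • p.2) - ψ z) / p.1) (quotFilter w) (𝓝 L)) :
    dsub ψ z w = L := by
  have := quotFilter_neBot w
  exact (EReal.tendsto_coe.2 h).liminf_eq

theorem mem_graphDeriv_of_eventually {Y : E → Set F} {xb : E} {yb : F} {u : E} {h : F}
    {t : ℕ → ℝ} {u' : ℕ → E} {h' : ℕ → F} (ht : ∀ k, 0 < t k)
    (ht0 : Tendsto t atTop (𝓝 0)) (hu : Tendsto u' atTop (𝓝 u)) (hh : Tendsto h' atTop (𝓝 h))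
    (hY : ∀ᶠ k in atTop, yb + t k • h' k ∈ Y (xb + t k • u' k)) :
    h ∈ graphDeriv Y xb yb u := by
  obtain ⟨N, hN⟩ := eventually_atTop.1 hY
  have hs := tendsto_add_atTop_nat N
  exact ⟨fun k => t (k + N), fun k => u' (k + N), fun k => h' (k + N), fun k => ht _,
    ht0.comp hs, hu.comp hs, hh.comp hs, fun k => hN _ (Nat.le_add_left N k)⟩

/-- A semidifferentiable function is bounded above near the reference point. -/
theorem SemidiffAt.exists_bound {ψ : E → ℝ} {z : E} (h : SemidiffAt ψ z) :
    ∃ r > 0, ∃ C, ∀ w, ‖w - z‖ < r → ψ w ≤ C := by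
  obtain ⟨L, hL⟩ := h 0
  have h1 := hL.eventually (gt_mem_nhds (lt_add_one L))
  obtain ⟨p, hp, q, hq, hpq⟩ := eventually_prod_iff.1 h1
  obtain ⟨t, htp, ht⟩ := (hp.and self_mem_nhdsWithin).exists
  have ht : 0 < t := ht
  obtain ⟨r, hr, hrq⟩ := Metric.eventually_nhds_iff.1 hq
  refine ⟨t * r, by positivity, ψ z + (L + 1) * t, fun w hw => ?_⟩
  have hq' : q (t⁻¹ • (w - z)) := by
    apply hrq
    rw [dist_zero_right, norm_smul, Real.norm_of_nonneg (by positivity), inv_mul_lt_iff₀ ht]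
    exact hw
  have := hpq htp hq'
  simp only [smul_inv_smul₀ ht.ne', add_sub_cancel] at this
  rw [div_lt_iff₀ ht] at this
  linarith

end Sequential

section Multiplier

variable {n m : ℕ}

/-- If the multiplier `v` did not vanish, strong twice epi-differentiability in the zero direction
would produce a critical direction along which the second subderivative of `δ_{gph Y}` is `-∞`. -/
theorem exists_d2IndSub_eq_bot {Y : Eu n → Set (Eu m)} {xb : Eu n} {yb : Eu m} (hyb : yb ∈ Y xb)
    (hcalm : SetCalmAround Y xb yb) {u v ξ₁ : Eu n} {ξ₂ : Eu m} (hv : v ≠ 0) (hvu : ⟪v, u⟫ = (0 : ℝ))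
    (hstrong : StrongTwiceEpiDiffInd (gphSet Y) (xb, yb) (fun w => ⟪ξ₁, w.1⟫ + ⟪ξ₂, w.2⟫)) :
    ∃ h ∈ graphDeriv Y xb yb u, (0 : ℝ) ≤ ⟪ξ₁, u⟫ + ⟪ξ₂, h⟫ ∧
      d2IndSub (gphSet Y) (fun w => ⟪v, w.1⟫ + ⟪ξ₁, w.1⟫ + ⟪ξ₂, w.2⟫) (xb, yb) (u, h) = ⊥ := by
  obtain ⟨l, hl, U, hU, V, hV, hUV⟩ := hcalm
  set r : ℕ → ℝ := fun k => 1 / ((k : ℝ) + 1) with hr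
  have hr0 : ∀ k, 0 < r k := fun k => by positivity
  have hr1 : ∀ k, r k ≤ 1 := fun k => by
    rw [hr]; simp only; rw [div_le_one (by positivity)]; linarith [(Nat.cast_nonneg k : (0:ℝ) ≤ k)]
  have hrt : Tendsto r atTop (𝓝 0) := tendsto_one_div_add_atTop_nhds_zero_nat
  have hrp : ∀ p : ℕ, p ≠ 0 → Tendsto (fun k => r k ^ p) atTop (𝓝 0) := fun p hp => by
    simpa [hp] using hrt.pow p
  set w : ℕ → Eu n := fun k => u + r k ^ 4 • v with hw
  have hwt : Tendsto w atTop (𝓝 u) := by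
    simpa using ((hrp 4 (by norm_num)).smul_const v).const_add u
  have hrw : Tendsto (fun k => r k • w k) atTop (𝓝 0) := by simpa using hrt.smul hwt
  obtain ⟨g, hg, hq⟩ := hstrong 0 0 (fun k => r k ^ 7) (fun k => r k • w k)
    (fun k => by have := hr0 k; positivity) (hrp 7 (by norm_num)) hrw
  have hS0 : d2IndSub (gphSet Y) (fun w => ⟪ξ₁, w.1⟫ + ⟪ξ₂, w.2⟫) (xb, yb) ((0 : Eu n), (0 : Eu m))
      ≤ 0 := by
    refine liminf_le_of_tendsto_comp (tendsto_quotFilter hr0 hrt tendsto_const_nhds) ?_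
    have : (xb, yb) ∈ gphSet Y := hyb
    simp [this]
  have hlt : ∀ᶠ k in atTop, _ := hq.eventually (gt_mem_nhds (hS0.trans_lt (zero_lt_one)))
  have hfact : ∀ᶠ k in atTop, yb + r k ^ 7 • g k ∈ Y (xb + r k ^ 8 • w k) ∧
      -(r k ^ 6 / 2) ≤ ⟪ξ₁, w k⟫ + ⟪ξ₂, (r k)⁻¹ • g k⟫ := by
    filter_upwards [hlt] with k hk
    split_ifs at hk with hmem
    · have hmem' : yb + r k ^ 7 • g k ∈ Y (xb + r k ^ 7 • (r k • w k)) := hmem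
      rw [smul_smul, ← pow_succ] at hmem'
      refine ⟨hmem', ?_⟩
      have hk' : -((r k ^ 7) * (⟪ξ₁, r k • w k⟫ + ⟪ξ₂, g k⟫)) / ((r k ^ 7) ^ 2 / 2) < (1 : ℝ) := by
        exact_mod_cast hk
      have hr0k := hr0 k
      rw [div_lt_iff₀ (by positivity), real_inner_smul_right] at hk'
      rw [real_inner_smul_right]
      set a : ℝ := ⟪ξ₁, w k⟫
      set b : ℝ := ⟪ξ₂, g k⟫
      have hb : b = r k * ((r k)⁻¹ * b) := by field_simp
      rw [hb] at hk'
      set c := (r k)⁻¹ * b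
      have : r k ^ 8 * (-(r k ^ 6 / 2)) ≤ r k ^ 8 * (a + c) := by nlinarith
      exact le_of_mul_le_mul_left this (by positivity)
    · exact absurd hk (by simp)
  have hbd : ∀ᶠ k in atTop, ‖(r k)⁻¹ • g k‖ ≤ l * (‖u‖ + ‖v‖) := by
    have hx : Tendsto (fun k => xb + r k ^ 8 • w k) atTop (𝓝 xb) := by
      simpa using ((hrp 8 (by norm_num)).smul hwt).const_add xb
    have hy : Tendsto (fun k => yb + r k ^ 7 • g k) atTop (𝓝 yb) := by
      simpa using ((hrp 7 (by norm_num)).smul hg).const_add yb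
    filter_upwards [hfact, hx.eventually_mem hU, hy.eventually_mem hV] with k hk hkU hkV
    have h1 := hUV _ hkU _ ⟨hk.1, hkV⟩
    have hr0k := hr0 k
    simp only [add_sub_cancel_left, norm_smul, norm_pow, Real.norm_of_nonneg hr0k.le] at h1
    have h2 : ‖w k‖ ≤ ‖u‖ + ‖v‖ := by
      refine (norm_add_le _ _).trans ?_
      gcongr
      rw [norm_smul, norm_pow, Real.norm_of_nonneg hr0k.le]
      exact mul_le_of_le_one_left (norm_nonneg _) (pow_le_one₀ hr0k.le (hr1 k))
    rw [norm_smul, norm_inv, Real.norm_of_nonneg hr0k.le, inv_mul_le_iff₀ hr0k]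
    have h3 : r k ^ 7 * ‖g k‖ ≤ r k ^ 7 * (r k * (l * ‖w k‖)) := by linarith
    calc ‖g k‖ ≤ r k * (l * ‖w k‖) := le_of_mul_le_mul_left h3 (by positivity)
      _ ≤ _ := by gcongr
  obtain ⟨h, -, φ, hφ, hh⟩ := tendsto_subseq_of_frequently_bounded
    (x := fun k => (r k)⁻¹ • g k) (Metric.isBounded_closedBall (x := (0 : Eu m))
      (r := l * (‖u‖ + ‖v‖))) (hbd.mono fun k hk => by simpa using hk).frequently
  have hφt := hφ.tendsto_atTop
  have hs0 : ∀ k, 0 < r (φ k) ^ 8 := fun k => by have := hr0 (φ k); positivity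
  have hst : Tendsto (fun k => r (φ k) ^ 8) atTop (𝓝 0) := (hrp 8 (by norm_num)).comp hφt
  have hwφ : Tendsto (fun k => w (φ k)) atTop (𝓝 u) := hwt.comp hφt
  have hh : Tendsto (fun k => (r (φ k))⁻¹ • g (φ k)) atTop (𝓝 h) := hh
  have hfφ := hφt.eventually hfact
  have hmem : ∀ᶠ k in atTop, yb + r (φ k) ^ 8 • ((r (φ k))⁻¹ • g (φ k)) ∈
      Y (xb + r (φ k) ^ 8 • w (φ k)) := by
    filter_upwards [hfφ] with k hk
    have : r (φ k) ^ 8 * (r (φ k))⁻¹ = r (φ k) ^ 7 := by have := hr0 (φ k); field_simp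
    rw [smul_smul, this]; exact hk.1
  refine ⟨h, mem_graphDeriv_of_eventually hs0 hst hwφ hh hmem, ?_, ?_⟩
  · refine le_of_tendsto_of_tendsto (f := fun k => -(r (φ k) ^ 6 / 2)) ?_
      ((tendsto_const_nhds.inner hwφ).add (tendsto_const_nhds.inner hh)) (hfφ.mono fun k hk => hk.2)
    simpa using (((hrp 6 (by norm_num)).comp hφt).div_const 2).neg
  · refine le_bot_iff.1 (liminf_le_of_tendsto_comp
      (tendsto_quotFilter hs0 hst (hwφ.prodMk_nhds hh)) ?_)
    have hvv : 0 < ‖v‖ ^ 2 := by have := norm_pos_iff.2 hv; positivity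
    have hsmall : ∀ᶠ k in atTop, r (φ k) ^ 2 < ‖v‖ ^ 2 :=
      ((hrp 2 (by norm_num)).comp hφt).eventually (gt_mem_nhds hvv)
    have hbot : Tendsto (fun k => -(r (φ k) ^ 8 * (⟪v, w (φ k)⟫ + ⟪ξ₁, w (φ k)⟫ +
        ⟪ξ₂, (r (φ k))⁻¹ • g (φ k)⟫)) / ((r (φ k) ^ 8) ^ 2 / 2)) atTop atBot := by
      have hinv : Tendsto (fun k => ‖v‖ ^ 2 * (r (φ k) ^ 4)⁻¹) atTop atTop := by
        refine Tendsto.const_mul_atTop hvv (Tendsto.inv_tendsto_nhdsGT_zero ?_)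
        exact tendsto_nhdsWithin_iff.2 ⟨(hrp 4 (by norm_num)).comp hφt,
          Eventually.of_forall fun k => by have := hr0 (φ k); simp only [mem_Ioi]; positivity⟩
      refine tendsto_atBot_mono' _ ?_ (tendsto_neg_atTop_atBot.comp hinv)
      filter_upwards [hfφ, hsmall] with k hk hk2
      have hvw : ⟪v, w (φ k)⟫ = r (φ k) ^ 4 * ‖v‖ ^ 2 := by
        rw [hw]; simp only
        rw [inner_add_right, hvu, real_inner_smul_right, real_inner_self_eq_norm_sq, zero_add]
      have hk1 := hk.2
      have hρ := hr0 (φ k)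
      simp only [Function.comp]
      rw [hvw, div_le_iff₀ (by positivity), add_assoc]
      set A := ⟪ξ₁, w (φ k)⟫ + ⟪ξ₂, (r (φ k))⁻¹ • g (φ k)⟫
      set ρ := r (φ k)
      have : -(‖v‖ ^ 2 * (ρ ^ 4)⁻¹) * ((ρ ^ 8) ^ 2 / 2) = -(‖v‖ ^ 2 / 2) * ρ ^ 12 := by
        field_simp
      rw [this]
      have h1 : ρ ^ 8 * (ρ ^ 4 * ‖v‖ ^ 2 / 2) ≤ ρ ^ 8 * (ρ ^ 4 * ‖v‖ ^ 2 + A) := by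
        gcongr
        nlinarith [mul_lt_mul_of_pos_left hk2 (pow_pos hρ 4)]
      linarith
    refine (EReal.tendsto_coe_nhds_bot_iff.2 hbot).congr' ?_
    filter_upwards [hmem] with k hk
    have : (xb, yb) + r (φ k) ^ 8 • (w (φ k), (r (φ k))⁻¹ • g (φ k)) ∈ gphSet Y := hk
    rw [if_pos this]

end Multiplier

/-- Second-order sufficient optimality conditions for a calm local
minimax point of the couple-constrained minimax problem, with second-order growth. -/
theorem secondOrder_sufficient_calmLocalMinimax
    {n m : ℕ} (f : Eu n × Eu m → ℝ) (X : Set (Eu n)) (Y : Eu n → Set (Eu m))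
    (xb : Eu n) (yb : Eu m) (hX : IsClosed X) (hY : ∀ x, IsClosed (Y x))
    (hxb : xb ∈ X) (hyb : yb ∈ Y xb)
    (hf : TwiceSemidiffAt f (xb, yb))
    (hsemi : SetSemidiffAt Y xb yb) (hcalm : SetCalmAround Y xb yb)
    -- (1) first-order conditions
    (h1x : ∀ u ∈ tCone X xb,
      (0 : EReal) ≤ ⨆ h ∈ graphDeriv Y xb yb u, dsub f (xb, yb) (u, h))
    (h1y : ∀ h ∈ tCone (Y xb) yb, dsub (fun y => f (xb, y)) yb h ≤ (0 : EReal))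
    -- (2) second-order sufficient condition for the inner maximization
    (h2 : ∀ h ∈ tCone (Y xb) yb ∩ {h' | dsub (fun y => f (xb, y)) yb h' = (0 : EReal)},
      h ≠ 0 →
      d2sub (fun y => f (xb, y)) yb h -
        d2IndSub (Y xb) (fun h' => (dsub (fun y => f (xb, y)) yb h').toReal) yb h <
      (0 : EReal))
    -- (3) existence (as functions of `u`) of the multiplier vectors and the
    -- finiteness/strong twice epi-differentiability assumptions
    (v ξ₁ : Eu n → Eu n) (ξ₂ : Eu n → Eu m)
    (h3 : ∀ u ∈ tCone X xb ∩
        {u' | (⨆ h' ∈ graphDeriv Y xb yb u', dsub f (xb, yb) (u', h')) = (0 : EReal)},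
      -(v u) ∈ limNCone X xb ∧ ⟪v u, u⟫ = (0 : ℝ) ∧
      (ξ₁ u, ξ₂ u) ∈ limNConeP (gphSet Y) (xb, yb) ∧
      (∀ (u' : Eu n) (h' : Eu m),
        ((⟪v u, u'⟫ + ⟪ξ₁ u, u'⟫ + ⟪ξ₂ u, h'⟫ : ℝ) : EReal) = dsub f (xb, yb) (u', h')) ∧
      (d2IndVec X xb (-(v u)) u ≠ ⊤ ∧ d2IndVec X xb (-(v u)) u ≠ ⊥) ∧
      (∀ h ∈ graphDeriv Y xb yb u ∩ {h' | dsub f (xb, yb) (u, h') = (0 : EReal)},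
        d2IndSub (gphSet Y) (fun w => (dsub f (xb, yb) w).toReal) (xb, yb) (u, h) ≠ ⊤ ∧
        d2IndSub (gphSet Y) (fun w => (dsub f (xb, yb) w).toReal) (xb, yb) (u, h) ≠ ⊥) ∧
      StrongTwiceEpiDiffInd (gphSet Y) (xb, yb)
        (fun w => ⟪ξ₁ u, w.1⟫ + ⟪ξ₂ u, w.2⟫))
    -- (4) second-order sufficient condition for the outer minimization
    (h4 : ∀ u ∈ tCone X xb ∩
        {u' | (⨆ h' ∈ graphDeriv Y xb yb u', dsub f (xb, yb) (u', h')) = (0 : EReal)},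
      u ≠ 0 →
      ∃ h ∈ graphDeriv Y xb yb u ∩ {h' | dsub f (xb, yb) (u, h') = (0 : EReal)},
        (0 : EReal) < d2sub f (xb, yb) (u, h) + d2IndVec X xb (-(v u)) u -
          d2IndSub (gphSet Y) (fun w => (dsub f (xb, yb) w).toReal) (xb, yb) (u, h)) :
    IsCalmLocalMinimaxPt f X Y xb yb ∧ SecondOrderGrowth f X Y xb yb := by
  have ⟨l, hl, U, hU, V, hV, hUV⟩ := hcalm
  have key : ∃ δ > (0 : ℝ), ∃ μ > (0 : ℝ), ∀ x ∈ X ∩ closedBall xb δ,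
      ∃ y ∈ Y x ∩ closedBall yb (l * ‖x - xb‖), f (xb, yb) + μ * ‖x - xb‖ ^ 2 ≤ f (x, y) := by
    by_contra! hcon
    have hpos : ∀ k : ℕ, (0 : ℝ) < 1 / ((k : ℝ) + 1) := fun k => by positivity
    choose x hxmem hxlt using fun k : ℕ => hcon _ (hpos k) _ (hpos k)
    have hxne : ∀ k, 0 < ‖x k - xb‖ := fun k => by
      rw [norm_pos_iff, sub_ne_zero]
      intro he
      have := hxlt k yb
      simp [he, hyb] at this
    have hunit : ∀ k, ‖x k - xb‖⁻¹ • (x k - xb) ∈ sphere (0 : Eu n) 1 := fun k => by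
      have := hxne k
      simp [norm_smul, this.ne']
    obtain ⟨u, hu1, φ, hφ, hut⟩ := (isCompact_sphere (0 : Eu n) 1).tendsto_subseq hunit
    set t : ℕ → ℝ := fun k => ‖x (φ k) - xb‖ with ht
    set w : ℕ → Eu n := fun k => (t k)⁻¹ • (x (φ k) - xb) with hw
    have hwt : Tendsto w atTop (𝓝 u) := hut
    have ht0 : ∀ k, 0 < t k := fun k => hxne _
    have hεt : Tendsto (fun k => 1 / ((φ k : ℝ) + 1)) atTop (𝓝 0) :=
      tendsto_one_div_add_atTop_nhds_zero_nat.comp hφ.tendsto_atTop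
    have htt : Tendsto t atTop (𝓝 0) :=
      squeeze_zero (fun k => (ht0 k).le)
        (fun k => by simpa [dist_eq_norm] using (hxmem (φ k)).2) hεt
    have hxw : ∀ k, xb + t k • w k = x (φ k) := fun k => by
      simp [hw, smul_inv_smul₀ (ht0 k).ne']
    have huX : u ∈ tCone X xb :=
      ⟨t, w, ht0, htt, hwt, fun k => by rw [hxw]; exact (hxmem _).1⟩
    have hu0 : u ≠ 0 := by
      rintro rfl
      simp at hu1
    have hlt : ∀ (h : Eu m) (h' : ℕ → Eu m), Tendsto h' atTop (𝓝 h) →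
        (∀ᶠ k in atTop, yb + t k • h' k ∈ Y (xb + t k • w k)) →
        ∀ᶠ k in atTop, f ((xb, yb) + t k • (w k, h' k)) <
          f (xb, yb) + 1 / ((φ k : ℝ) + 1) * t k ^ 2 := by
      intro h h' hh' hmem
      have hx : Tendsto (fun k => xb + t k • w k) atTop (𝓝 xb) := by
        simpa using (htt.smul hwt).const_add xb
      have hy : Tendsto (fun k => yb + t k • h' k) atTop (𝓝 yb) := by
        simpa using (htt.smul hh').const_add yb
      filter_upwards [hmem, hx.eventually_mem hU, hy.eventually_mem hV] with k hk hkU hkV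
      have h1 := hUV _ hkU _ ⟨hk, hkV⟩
      have h2 := hxlt (φ k) (yb + t k • h' k)
        ⟨by rw [← hxw]; exact hk, by rw [mem_closedBall, dist_eq_norm, ← hxw]; exact h1⟩
      rw [← hxw] at h2
      have h3 : ‖xb + t k • w k - xb‖ = t k := by rw [hxw]
      rw [h3] at h2
      exact h2
    have hle : ∀ h ∈ graphDeriv Y xb yb u, dsub f (xb, yb) (u, h) ≤ 0 := by
      intro h hh
      rw [hsemi u] at hh
      obtain ⟨h', hh', hmem⟩ := hh t w ht0 htt hwt
      obtain ⟨L, hL⟩ := hf.1 (u, h)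
      rw [dsub_eq_of_tendsto hL]
      have h1 := hL.comp (tendsto_quotFilter ht0 htt (hwt.prodMk_nhds hh'))
      have h2 : Tendsto (fun k => 1 / ((φ k : ℝ) + 1) * t k) atTop (𝓝 0) := by
        simpa using hεt.mul htt
      have h3 : L ≤ 0 := by
        refine le_of_tendsto_of_tendsto h1 h2 ?_
        filter_upwards [hlt h h' hh' (Eventually.of_forall hmem)] with k hk
        simp only [Function.comp]
        rw [div_le_iff₀ (ht0 k)]
        linarith
      exact_mod_cast h3
    have hucrit : u ∈ tCone X xb ∩
        {u' | (⨆ h' ∈ graphDeriv Y xb yb u', dsub f (xb, yb) (u', h')) = (0 : EReal)} :=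
      ⟨huX, le_antisymm (iSup₂_le hle) (h1x u huX)⟩
    obtain ⟨-, hvu, -, hdf, -, hfin, hstrong⟩ := h3 u hucrit
    have hv : v u = 0 := by
      by_contra hv
      obtain ⟨h, hh, hge, hbot⟩ := exists_d2IndSub_eq_bot hyb hcalm hv hvu hstrong
      have h0 : dsub f (xb, yb) (u, h) = 0 := by
        refine le_antisymm (hle h hh) ?_
        rw [← hdf, hvu, zero_add]
        exact_mod_cast hge
      refine (hfin h ⟨hh, h0⟩).2 ?_
      rw [← hbot]
      congr 1
      funext p
      rw [← Prod.mk.eta (p := p), ← hdf, EReal.toReal_coe]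
    obtain ⟨h, hh, hgt⟩ := h4 u hucrit hu0
    have hdf' : (fun p => (dsub f (xb, yb) p).toReal) =
        fun p : Eu n × Eu m => ⟪ξ₁ u, p.1⟫ + ⟪ξ₂ u, p.2⟫ := by
      funext p
      rw [← Prod.mk.eta (p := p), ← hdf, EReal.toReal_coe, hv, inner_zero_left, zero_add]
    obtain ⟨h', hh', hq⟩ := hstrong u h t w ht0 htt hwt
    have hfinh := hfin h hh
    rw [← hdf'] at hq
    lift d2IndSub (gphSet Y) (fun w => (dsub f (xb, yb) w).toReal) (xb, yb) (u, h) to ℝ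
      using hfinh with d hd
    have hX0 : d2IndVec X xb (-(v u)) u ≤ 0 := by
      refine liminf_le_of_tendsto_comp (tendsto_quotFilter ht0 htt hwt) ?_
      have : ∀ k, xb + t k • w k ∈ X := fun k => by rw [hxw]; exact (hxmem _).1
      simp [this, hv]
    obtain ⟨Q, hQ⟩ := hf.2 (u, h)
    have hQ' : d2sub f (xb, yb) (u, h) = Q := by
      have := quotFilter_neBot (u, h)
      exact (EReal.tendsto_coe.2 hQ).liminf_eq
    have hQd : d < Q := by
      have h1 : (0 : EReal) < (Q : EReal) - d := by
        refine hgt.trans_le ?_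
        rw [hQ']
        refine EReal.sub_le_sub ?_ le_rfl
        simpa using add_le_add_right hX0 (Q : EReal)
      have h2 : (0 : ℝ) < Q - d := by exact_mod_cast h1
      linarith
    have hmem : ∀ᶠ k in atTop, (xb, yb) + t k • (w k, h' k) ∈ gphSet Y := by
      filter_upwards [hq.eventually (gt_mem_nhds (EReal.coe_lt_top d))] with k hk
      by_contra hn
      have hk' := hk
      rw [if_neg hn] at hk'
      exact lt_irrefl _ hk'
    have hq' : Tendsto (fun k => -(t k * (dsub f (xb, yb) (w k, h' k)).toReal) / (t k ^ 2 / 2))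
        atTop (𝓝 d) := by
      refine EReal.tendsto_coe.1 (hq.congr' ?_)
      filter_upwards [hmem] with k hk
      rw [if_pos hk]
    have hsum := (hQ.comp (tendsto_quotFilter ht0 htt (hwt.prodMk_nhds hh'))).sub hq'
    have h2ε : Tendsto (fun k => 2 * (1 / ((φ k : ℝ) + 1))) atTop (𝓝 0) := by
      simpa using hεt.const_mul 2
    have : Q - d ≤ 0 := by
      refine le_of_tendsto_of_tendsto hsum h2ε ?_
      filter_upwards [hlt h h' hh' hmem] with k hk
      have := ht0 k
      simp only [Function.comp]
      rw [← sub_div, div_le_iff₀ (by positivity)]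
      linarith
    linarith
  obtain ⟨δ, hδ, μ, hμ, hgrow⟩ := key
  obtain ⟨r, hr, C, hC⟩ := hf.1.exists_bound
  obtain ⟨ρ, hρ, hρV⟩ := Metric.nhds_basis_closedBall.mem_iff.1 hV
  set δ₀ : ℝ := min (min δ ρ) (min (r / 2) (r / (2 * l))) with hδ₀
  have hδ₀pos : 0 < δ₀ := by positivity
  have hδ₀δ : δ₀ ≤ δ := (min_le_left _ _).trans (min_le_left _ _)
  have hδ₀ρ : δ₀ ≤ ρ := (min_le_left _ _).trans (min_le_right _ _)
  have hδ₀r : δ₀ ≤ r / 2 := (min_le_right _ _).trans (min_le_left _ _)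
  have hδ₀l : l * δ₀ ≤ r / 2 := by
    have : δ₀ ≤ r / (2 * l) := (min_le_right _ _).trans (min_le_right _ _)
    rw [le_div_iff₀ (by positivity)] at this
    linarith
  have hmax : ∀ s ≤ δ₀, ∀ x ∈ X ∩ closedBall xb s, ∀ s' ≤ δ₀, ‖x - xb‖ ≤ s' →
      f (xb, yb) + μ * ‖x - xb‖ ^ 2 ≤ maxVal f x (Y x ∩ closedBall yb (l * s')) := by
    intro s hs x hx s' hs' hxs'
    obtain ⟨y, hy, hfy⟩ := hgrow x ⟨hx.1, closedBall_subset_closedBall (hs.trans hδ₀δ) hx.2⟩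
    refine hfy.trans (le_csSup ⟨C, ?_⟩
      ⟨y, ⟨hy.1, closedBall_subset_closedBall (by gcongr) hy.2⟩, rfl⟩)
    rintro _ ⟨y', hy', rfl⟩
    refine hC _ (max_lt ?_ ?_)
    · change ‖x - xb‖ < r
      linarith
    · change ‖y' - yb‖ < r
      have h1 : ‖y' - yb‖ ≤ l * s' := by simpa [dist_eq_norm] using hy'.2
      have h2 : l * s' ≤ l * δ₀ := by gcongr
      linarith
  have hiso : ∀ s ≤ δ₀, ∀ y ∈ Y xb ∩ closedBall yb s, y = yb := by
    intro s hs y hy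
    have := hUV xb (mem_of_mem_nhds hU) y
      ⟨hy.1, hρV (closedBall_subset_closedBall (hs.trans hδ₀ρ) hy.2)⟩
    simpa [sub_eq_zero] using this
  refine ⟨⟨hxb, hyb, δ₀, hδ₀pos, fun s => l * |s|, fun s => by positivity, ?_, ⟨l, hl, ?_⟩, ?_⟩,
    δ₀, hδ₀pos, 1, one_pos, μ, hμ, l, hl, ?_⟩
  · have : Tendsto (fun s : ℝ => l * |s|) (𝓝 0) (𝓝 (l * |0|)) :=
      (continuous_const.mul continuous_abs).tendsto 0
    rw [abs_zero, mul_zero] at this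
    exact this.mono_left nhdsWithin_le_nhds
  · intro s hs
    simp only [abs_of_nonneg hs, le_refl]
  · intro s hs x hx y hy
    rw [hiso s hs.2 y hy]
    refine ⟨le_rfl, ?_⟩
    have h1 := hmax s hs.2 x hx s hs.2 (by simpa [dist_eq_norm] using hx.2)
    simp only [abs_of_pos hs.1]
    have h2 : 0 ≤ μ * ‖x - xb‖ ^ 2 := by positivity
    linarith
  · intro x hx y hy
    rw [hiso δ₀ le_rfl y hy]
    refine ⟨by simp, ?_⟩
    have h1 := hmax δ₀ le_rfl x hx _ (by simpa [dist_eq_norm] using hx.2) le_rfl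
    linarith
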